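/- For every nonzero a ∈ V, the right-multiplication map x ↦ x ⋆ a is a bijection of V. -/

import Mathlib

open Matrix

/-- The seven matrices `A₁,…,A₇` over `F₂ = ZMod 2` (indexed by `Fin 7`). -/
def A : Fin 7 → Matrix (Fin 7) (Fin 7) (ZMod 2)
  | 0 => 1
  | 1 => !![0,0,1,0,0,0,0; 1,0,1,0,0,0,0; 0,1,0,0,0,0,0; 0,0,0,1,1,1,1;
            0,0,0,1,0,1,0; 0,0,0,0,0,1,1; 0,0,0,0,0,1,0]
  | 2 => !![0,1,0,0,0,0,0; 0,1,1,0,0,0,0; 1,0,1,0,0,0,0; 0,0,0,0,1,0,0;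
            0,0,0,1,1,0,0; 0,0,0,1,1,1,1; 0,0,0,1,0,1,0]
  | 3 => !![0,0,0,1,1,0,0; 0,0,0,1,1,1,0; 0,0,0,0,1,0,1; 1,0,0,0,0,0,1;
            0,0,1,0,0,1,0; 0,1,1,1,0,1,1; 0,0,0,1,1,0,1]
  | 4 => !![0,0,0,0,1,0,0; 0,0,0,0,1,1,1; 0,0,0,1,0,1,0; 0,0,1,0,0,1,1;
            1,0,1,0,0,0,1; 0,0,0,0,1,1,0; 0,1,1,1,0,1,1]
  | 5 => !![0,0,0,1,0,1,1; 0,0,0,1,1,0,0; 0,0,0,0,1,0,0; 0,0,0,1,0,1,0;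
            0,1,1,1,1,1,1; 1,0,1,0,1,1,0; 0,0,1,1,0,1,1]
  | 6 => !![0,0,0,1,1,0,1; 0,0,0,0,1,0,0; 0,0,0,1,0,0,0; 0,1,1,0,1,0,1;
            0,1,1,1,0,1,0; 0,0,1,1,1,0,1; 1,0,0,0,1,1,0]

/-- The multiplication `x ⋆ y = (∑ i, xᵢ Aᵢ) ·ᵥ y` on `V = F₂⁷`. -/
def star (x y : Fin 7 → ZMod 2) : Fin 7 → ZMod 2 := (∑ i, x i • A i) *ᵥ y

/-- The standard basis vectors of `V = F₂⁷`. -/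
def e (i : Fin 7) : Fin 7 → ZMod 2 := Pi.single i 1

/-!
Write `L x = ∑ i, xᵢ Aᵢ` for left multiplication by `x`. Since `V` is finite, it suffices that
`L x` is invertible for all `x ≠ 0`. As `L e₀ = 1`, this amounts to `L w` having no eigenvalue in
`F₂` when `w ≠ 0` lies in `W = ⟨e₁, …, e₆⟩`.

There is a Frobenius group of order 21 of autotopisms `(α, β, β)`, that is,
`β (x ⋆ y) = α x ⋆ β y`; then `L (α x) = β (L x) β⁻¹` has the same spectrum as `L x`. The maps `α`
fix `e₀` and act on `W ≅ F₈ ⊕ F₈`: the generator of order 7 multiplies each summand by a primitive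
element, the two having reciprocal minimal polynomials, and the generator of order 3 is `t ↦ t⁴` on
each summand. There are only five orbits on `W \ {0}`, and for a representative `w` of each the
minimal polynomial of `L w` has no root in `F₂`.
-/

open Polynomial

section General

variable {K B : Type*}

theorem spectrum_eq_empty_of_aeval_eq_zero [Field K] [Ring B] [Algebra K B] {a : B} {p : K[X]}
    (hp : aeval a p = 0) (hroot : ∀ c, p.eval c ≠ 0) : spectrum K a = ∅ := by
  cases subsingleton_or_nontrivial B
  · exact spectrum.of_subsingleton a
  · refine Set.eq_empty_of_forall_notMem fun c hc => hroot c ?_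
    have heval : p.eval c ∈ spectrum K (aeval a p) :=
      spectrum.subset_polynomial_aeval a p ⟨c, hc, rfl⟩
    simpa only [hp, spectrum.zero_eq, Set.mem_singleton_iff] using heval

theorem spectrum_eq_of_semiconjBy [CommSemiring K] [Ring B] [Algebra K B] {u a b : B}
    (hu : IsUnit u) (h : SemiconjBy u a b) : spectrum K b = spectrum K a := by
  obtain ⟨u, rfl⟩ := hu
  rw [u.eq_mul_inv_iff_mul_eq.mpr h.eq.symm, spectrum.units_conjugate]

variable {ι n : Type*} [Fintype ι] [Fintype n]

theorem semiconjBy_linearCombination [CommSemiring K] [Semiring B] [Algebra K B] {M : ι → B} {u : B}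
    {Q : Matrix ι ι K} (h : ∀ i, u * M i = (∑ j, Q j i • M j) * u) (x : ι → K) :
    SemiconjBy u (Fintype.linearCombination K M x) (Fintype.linearCombination K M (Q *ᵥ x)) := by
  calc
    u * ∑ i, x i • M i = ∑ i, x i • ((∑ j, Q j i • M j) * u) := by
      simp only [Finset.mul_sum, mul_smul_comm, h]
    _ = (∑ i, ∑ j, (Q j i * x i) • M j) * u := by
      simp only [Finset.sum_mul, Finset.smul_sum, smul_mul_assoc, smul_smul, mul_comm (x _)]
    _ = (∑ j, (Q *ᵥ x) j • M j) * u := by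
      rw [Finset.sum_comm]
      simp only [mulVec, dotProduct, Finset.sum_smul]

theorem spectrum_linearCombination_iterate [CommSemiring K] [Ring B] [Algebra K B] {M : ι → B}
    {u : B} {Q : Matrix ι ι K} (hu : IsUnit u) (h : ∀ i, u * M i = (∑ j, Q j i • M j) * u) (k : ℕ)
    (x : ι → K) :
    spectrum K (Fintype.linearCombination K M ((Q *ᵥ ·)^[k] x)) =
      spectrum K (Fintype.linearCombination K M x) := by
  have hinv :
      Function.Semiconj (fun x => spectrum K (Fintype.linearCombination K M x)) (Q *ᵥ ·) id :=
    fun x => spectrum_eq_of_semiconjBy hu (semiconjBy_linearCombination h x)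
  simpa only [Function.iterate_id, id_eq] using hinv.iterate_right k x

theorem bijective_mulVec_of_isUnit [Field K] [DecidableEq n] {V : Type*} [AddCommGroup V]
    [Module K V] [FiniteDimensional K V]
    (hV : Module.finrank K V = Fintype.card n) {L : V →ₗ[K] Matrix n n K}
    (hL : ∀ x, x ≠ 0 → IsUnit (L x)) {a : n → K} (ha : a ≠ 0) :
    Function.Bijective fun x => L x *ᵥ a := by
  let R : V →ₗ[K] n → K := (mulVecBilin K K).flip a ∘ₗ L
  have hinj : Function.Injective R := by
    refine (injective_iff_map_eq_zero R).mpr fun x (hx : L x *ᵥ a = 0) => ?_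
    by_contra hx0
    exact ha (mulVec_injective_iff_isUnit.mpr (hL x hx0) (by rw [hx, mulVec_zero]))
  have hdim : Module.finrank K V = Module.finrank K (n → K) := by rw [hV, Module.finrank_pi]
  exact ⟨hinj, (LinearMap.injective_iff_surjective_of_finrank_eq_finrank hdim).mp hinj⟩

end General

/-- The linear map sending `x` to the matrix `∑ i, xᵢ Aᵢ` of left multiplication by `x`. -/
def leftMul : (Fin 7 → ZMod 2) →ₗ[ZMod 2] Matrix (Fin 7) (Fin 7) (ZMod 2) :=
  Fintype.linearCombination (ZMod 2) A

theorem leftMul_e (i : Fin 7) : leftMul (e i) = A i := by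
  rw [leftMul, e, Fintype.linearCombination_apply_single, one_smul]

/-- The matrix `α` of the autotopism `(α, β, β)` of order 7; `β` is `sevenfoldRight`. -/
def sevenfoldLeft : Matrix (Fin 7) (Fin 7) (ZMod 2) :=
  !![1,0,0,0,0,0,0; 0,1,0,1,1,0,1; 0,0,0,1,0,0,0; 0,0,0,0,1,0,0;
     0,0,1,1,0,0,0; 0,1,1,1,0,0,0; 0,0,1,1,0,1,0]

/-- The matrix `β` of the autotopism `(α, β, β)` of order 7; `α` is `sevenfoldLeft`. -/
def sevenfoldRight : Matrix (Fin 7) (Fin 7) (ZMod 2) :=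
  !![0,0,1,1,1,1,0; 0,1,0,0,0,0,0; 0,0,1,1,0,1,0; 1,0,1,1,0,0,0;
     0,0,0,1,1,0,0; 1,0,1,0,1,1,1; 0,1,1,0,0,1,1]

/-- The matrix `α` of the automorphism of order 3, that is, of the autotopism `(α, α, α)`. -/
def threefold : Matrix (Fin 7) (Fin 7) (ZMod 2) :=
  !![1,0,0,0,0,0,0; 0,1,0,0,0,0,0; 0,0,1,0,0,0,0; 0,0,0,0,1,0,0;
     0,0,0,1,1,0,0; 0,0,0,0,0,0,1; 0,0,0,0,0,1,1]

theorem isUnit_sevenfoldRight : IsUnit sevenfoldRight :=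
  IsUnit.of_pow_eq_one (n := 7) (by decide +kernel) (by decide)

theorem isUnit_threefold : IsUnit threefold :=
  IsUnit.of_pow_eq_one (n := 3) (by decide +kernel) (by decide)

theorem sevenfoldRight_mul_A (i : Fin 7) :
    sevenfoldRight * A i = (∑ j, sevenfoldLeft j i • A j) * sevenfoldRight := by
  revert i; decide +kernel

theorem threefold_mul_A (i : Fin 7) :
    threefold * A i = (∑ j, threefold j i • A j) * threefold := by
  revert i; decide +kernel

theorem spectrum_leftMul_sevenfoldLeft_iterate (k : ℕ) (x : Fin 7 → ZMod 2) :
    spectrum (ZMod 2) (leftMul ((sevenfoldLeft *ᵥ ·)^[k] x)) = spectrum (ZMod 2) (leftMul x) :=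
  spectrum_linearCombination_iterate isUnit_sevenfoldRight sevenfoldRight_mul_A k x

theorem spectrum_leftMul_threefold_iterate (k : ℕ) (x : Fin 7 → ZMod 2) :
    spectrum (ZMod 2) (leftMul ((threefold *ᵥ ·)^[k] x)) = spectrum (ZMod 2) (leftMul x) :=
  spectrum_linearCombination_iterate isUnit_threefold threefold_mul_A k x

/-- Representatives of the orbits of the symmetry group on the nonzero vectors of
`⟨e₁, …, e₆⟩`. -/
def orbitRepresentatives : List (Fin 7 → ZMod 2) := [e 1, e 2, e 1 + e 2, e 3, e 2 + e 5]

theorem exists_orbitRepresentative (w : Fin 7 → ZMod 2) (hw₀ : w 0 = 0) (hw : w ≠ 0) :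
    ∃ i : Fin 3, ∃ j : Fin 7, ∃ r ∈ orbitRepresentatives,
      w = (threefold *ᵥ ·)^[i] ((sevenfoldLeft *ᵥ ·)^[j] r) := by
  revert w; decide +kernel

theorem spectrum_leftMul_of_mem_orbitRepresentatives {r : Fin 7 → ZMod 2}
    (hr : r ∈ orbitRepresentatives) : spectrum (ZMod 2) (leftMul r) = ∅ := by
  have annihilated {a : Matrix (Fin 7) (Fin 7) (ZMod 2)} (p : (ZMod 2)[X]) (hp : aeval a p = 0)
      (hroot : ∀ c, p.eval c ≠ 0) := spectrum_eq_empty_of_aeval_eq_zero hp hroot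
  revert r
  simp only [orbitRepresentatives, List.forall_mem_cons, map_add, leftMul_e]
  refine ⟨?_, ?_, ?_, ?_, ?_, List.forall_mem_nil _⟩
  · exact annihilated (X ^ 7 + X ^ 4 + X ^ 2 + X + 1)
      (by simp only [map_add, map_pow, aeval_X, map_one]; decide +kernel)
      (by simp only [eval_add, eval_pow, eval_X, eval_one]; decide)
  · exact annihilated (X ^ 5 + X ^ 4 + 1)
      (by simp only [map_add, map_pow, aeval_X, map_one]; decide +kernel)
      (by simp only [eval_add, eval_pow, eval_X, eval_one]; decide)
  · exact annihilated (X ^ 7 + X ^ 5 + X ^ 3 + X ^ 2 + 1)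
      (by simp only [map_add, map_pow, aeval_X, map_one]; decide +kernel)
      (by simp only [eval_add, eval_pow, eval_X, eval_one]; decide)
  · exact annihilated (X ^ 7 + X ^ 5 + X ^ 3 + X ^ 2 + 1)
      (by simp only [map_add, map_pow, aeval_X, map_one]; decide +kernel)
      (by simp only [eval_add, eval_pow, eval_X, eval_one]; decide)
  · exact annihilated (X ^ 7 + X + 1)
      (by simp only [map_add, map_pow, aeval_X, map_one]; decide +kernel)
      (by simp only [eval_add, eval_pow, eval_X, eval_one]; decide)

theorem spectrum_leftMul_eq_empty {w : Fin 7 → ZMod 2} (hw₀ : w 0 = 0) (hw : w ≠ 0) :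
    spectrum (ZMod 2) (leftMul w) = ∅ := by
  obtain ⟨i, j, r, hr, rfl⟩ := exists_orbitRepresentative w hw₀ hw
  rw [spectrum_leftMul_threefold_iterate, spectrum_leftMul_sevenfoldLeft_iterate,
    spectrum_leftMul_of_mem_orbitRepresentatives hr]

theorem isUnit_leftMul {x : Fin 7 → ZMod 2} (hx : x ≠ 0) : IsUnit (leftMul x) := by
  obtain ⟨c, w, hw₀, rfl⟩ : ∃ (c : ZMod 2) (w : Fin 7 → ZMod 2), w 0 = 0 ∧ x = c • e 0 + w :=
    ⟨x 0, x - x 0 • e 0, by simp [e], by abel⟩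
  have hL : leftMul (c • e 0 + w) = algebraMap (ZMod 2) _ c + leftMul w := by
    rw [map_add, map_smul, leftMul_e, A, Algebra.algebraMap_eq_smul_one]
  rw [hL]
  by_cases hw : w = 0
  · have hc : c ≠ 0 := by
      rintro rfl
      exact hx (by rw [hw, zero_smul, add_zero])
    simpa only [hw, map_zero, add_zero] using hc.isUnit.map (algebraMap (ZMod 2) _)
  · rw [← spectrum.zero_notMem_iff (ZMod 2), ← spectrum.singleton_add_eq,
      spectrum_leftMul_eq_empty hw₀ hw, Set.add_empty]
    exact Set.notMem_empty 0

theorem stmt_4 :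
    ∀ a : Fin 7 → ZMod 2, a ≠ 0 → Function.Bijective (fun x => star x a) := by
  intro a ha
  have hstar : (fun x => star x a) = fun x => leftMul x *ᵥ a := rfl
  rw [hstar]
  exact bijective_mulVec_of_isUnit (Module.finrank_fintype_fun_eq_card _)
    (fun _ => isUnit_leftMul) ha
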